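/- arXiv:math/0410524 — 3 statements merged into one kernel-verified Lean document; each statement's English description precedes it below -/
import Mathlib

section
/- Let k be an algebraically closed field of characteristic zero and n a positive integer. Let F ∈ k[x][y] be a polynomial that is irreducible as an element of k[x,y], monic as a polynomial in y, and of positive degree in y. Set R = k[x][y]/(F), an integral domain, and let K be its field of fractions, which is a finite field extension of the rational function field k(x). Let g and h be nonzero elements of R such that for every maximal ideal P of R, the localized modules R_P/gR_P and R_P/hR_P have finite length as R_P-modules and n divides the integer ℓ(R_P/gR_P) − ℓ(R_P/hR_P). Then the field norm N_{K/k(x)}(g/h) is an n-th power in k(x)^*, i.e. there exists a nonzero r ∈ k(x) with N_{K/k(x)}(g/h) = r^n. -/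
/-!
For nonzero `g` in `R = k[x][y]/(F)`, the quotient `R/gR` is finite-dimensional over `k`, so it has
a composition series over `R`, with factors `R/Q` for `Q` in a multiset `s` of maximal ideals
(`exists_factors`). Length after localization is additive, hence `ℓ(R_P/gR_P)` is the multiplicity
of `P` in `s`. Since `k` is algebraically closed, each `R/Q` is isomorphic to `k[x]/(Q ∩ k[x])` as a
`k[x]`-module, so the multiplicity of `p = (x - α)` among the contractions `Q ∩ k[x]`, `Q ∈ s`, is
the length of `R/gR` localized at the prime `p` of `k[x]`.

On the other hand, Smith normal form gives `R/gR ≅ ∏ k[x]/(aᵢ)` with `N(g)` associated to `∏ aᵢ`,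
so the same local length is the multiplicity of `α` as a root of `N(g)`. Therefore
`mult_α N(g) = ∑ ℓ(R_P/gR_P)`, the sum running over `P` above `(x - α)`
(`exists_norm_factors`, stated through `s`).

The hypothesis on `g` and `h` then makes all root multiplicities of `N(g)` and `N(h)` congruent
modulo `n`. So those of `N(g) N(h)^(n-1)` are divisible by `n`, and this polynomial is an `n`-th
power, its leading coefficient having an `n`-th root in `k`. Dividing by `N(h)^n` gives the claim
(`exists_ratFunc_pow`).
-/

/-- The length of an `R`-module `M`: the length of the longest chain of submodules. -/
noncomputable def moduleLength (R M : Type*) [Ring R] [AddCommGroup M] [Module R M] :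
    WithBot ℕ∞ :=
  Order.krullDim (Submodule R M)

open Polynomial TensorProduct

/-- The length over `R_p` of the localization of `M` at the prime `p`, the localization being
encoded as the base change `R_p ⊗[R] M`. -/
noncomputable def lenAt (R : Type*) [CommRing R] (p : Ideal R) [p.IsPrime]
    (M : Type*) [AddCommGroup M] [Module R M] : ℕ∞ :=
  Module.length (Localization.AtPrime p) (Localization.AtPrime p ⊗[R] M)

section lenAt
variable {R : Type*} [CommRing R] (p : Ideal R) [p.IsPrime]
  {M N Q : Type*} [AddCommGroup M] [Module R M] [AddCommGroup N] [Module R N]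
  [AddCommGroup Q] [Module R Q]

lemma lenAt_congr (e : M ≃ₗ[R] N) : lenAt R p M = lenAt R p N :=
  (TensorProduct.AlgebraTensorModule.congr
    (LinearEquiv.refl (Localization.AtPrime p) (Localization.AtPrime p)) e).length_eq

lemma lenAt_exact (f : N →ₗ[R] M) (g : M →ₗ[R] Q) (hf : Function.Injective f)
    (hg : Function.Surjective g) (h : Function.Exact f g) :
    lenAt R p M = lenAt R p N + lenAt R p Q := by
  refine Module.length_eq_add_of_exact
    (TensorProduct.AlgebraTensorModule.lTensor (Localization.AtPrime p) (Localization.AtPrime p) f)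
    (TensorProduct.AlgebraTensorModule.lTensor (Localization.AtPrime p) (Localization.AtPrime p) g)
    ?_ ?_ ?_
  · exact Module.Flat.lTensor_preserves_injective_linearMap f hf
  · exact LinearMap.lTensor_surjective _ hg
  · exact lTensor_exact _ h hg

lemma lenAt_subsingleton [Subsingleton M] : lenAt R p M = 0 :=
  Module.length_eq_zero

lemma lenAt_pi {ι : Type*} [Fintype ι] (V : ι → Type*) [∀ i, AddCommGroup (V i)]
    [∀ i, Module R (V i)] : lenAt R p (∀ i, V i) = ∑ i, lenAt R p (V i) := by
  classical
  unfold lenAt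
  rw [(TensorProduct.piRight R (Localization.AtPrime p) (Localization.AtPrime p) V).length_eq,
    Module.length_pi_of_fintype]

lemma lenAt_quotient (I : Ideal R) : lenAt R p (R ⧸ I) =
    Module.length (Localization.AtPrime p)
      (Localization.AtPrime p ⧸ I.map (algebraMap R (Localization.AtPrime p))) :=
  ((Algebra.TensorProduct.quotIdealMapEquivTensorQuot
    (Localization.AtPrime p) I).toLinearEquiv.length_eq).symm

lemma lenAt_span (a : R) : lenAt R p (R ⧸ Ideal.span {a}) =
    Ring.ord (Localization.AtPrime p) (algebraMap R (Localization.AtPrime p) a) := by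
  rw [lenAt_quotient, Ideal.map_span, Set.image_singleton, Ring.ord]

open Classical in
lemma lenAt_simple (q : Ideal R) [q.IsMaximal] :
    lenAt R p (R ⧸ q) = if p = q then 1 else 0 := by
  rw [lenAt_quotient]
  split_ifs with h
  · subst h
    rw [Localization.AtPrime.map_eq_maximalIdeal, Module.length_eq_one_iff]
    rw [isSimpleModule_iff_isCoatom]
    exact (IsLocalRing.maximalIdeal.isMaximal _).out
  · rw [Module.length_eq_zero_iff, Submodule.Quotient.subsingleton_iff]
    exact IsLocalization.AtPrime.map_eq_top_of_not_le (p := p) _ fun hle =>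
      h (Ideal.IsMaximal.eq_of_le ‹_› (Ideal.IsPrime.ne_top ‹_›) hle).symm
end lenAt

open Classical in
/-- The composition factors of a finite length `R`-module `M`, as a multiset `s` of maximal ideals:
multiplicities in `s` are the local lengths of `M` over `R`, and, when `A → R` induces
isomorphisms on residue fields, multiplicities among the contractions of the members of `s` are the
local lengths of `M` over `A`. -/
lemma exists_factors {A R : Type*} [CommRing A] [CommRing R] [Algebra A R]
    (hmax : ∀ Q : Ideal R, Q.IsMaximal → (Q.comap (algebraMap A R)).IsMaximal)
    (hres : ∀ Q : Ideal R, Q.IsMaximal → Function.Surjective (algebraMap A (R ⧸ Q)))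
    {M : Type*} [AddCommGroup M] [Module R M] (hM : IsFiniteLength R M) :
    ∀ [Module A M] [IsScalarTower A R M], ∃ s : Multiset (Ideal R), (∀ Q ∈ s, Q.IsMaximal) ∧
      (∀ (P : Ideal R) [P.IsMaximal], lenAt R P M = s.count P) ∧
      (∀ (p : Ideal A) [p.IsMaximal],
        lenAt A p M = (s.map (Ideal.comap (algebraMap A R))).count p) := by
  induction hM with
  | of_subsingleton =>
    intro _ _
    exact ⟨0, by simp, by simp [lenAt_subsingleton], by simp [lenAt_subsingleton]⟩
  | @of_simple_quotient M _ _ N hS _ ih =>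
    intro _ _
    obtain ⟨s, hs, hP, hp⟩ := ih
    obtain ⟨Q, hQ, ⟨e⟩⟩ := isSimpleModule_iff_quot_maximal.mp hS
    have := hmax Q hQ
    -- equality of residue fields turns the simple factor `R ⧸ Q` into a simple `A`-module
    let f : (A ⧸ Q.comap (algebraMap A R)) ≃ₗ[A] (R ⧸ Q) :=
      (Submodule.quotEquivOfEq _ _ (by
        ext x
        rw [Ideal.mem_comap, LinearMap.mem_ker, Algebra.linearMap_apply,
          IsScalarTower.algebraMap_apply A R (R ⧸ Q), Ideal.Quotient.algebraMap_eq,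
          Ideal.Quotient.eq_zero_iff_mem])).trans
      ((Algebra.linearMap A (R ⧸ Q)).quotKerEquivOfSurjective (hres Q hQ))
    refine ⟨Q ::ₘ s, by simpa [hQ] using hs, fun P _ => ?_, fun p _ => ?_⟩
    · rw [lenAt_exact P N.subtype N.mkQ N.subtype_injective N.mkQ_surjective
        (LinearMap.exact_subtype_mkQ N), hP, lenAt_congr P e, lenAt_simple, Multiset.count_cons]
      push_cast; rfl
    · rw [lenAt_exact p (N.subtype.restrictScalars A) (N.mkQ.restrictScalars A)
        N.subtype_injective N.mkQ_surjective
        (LinearMap.exact_subtype_mkQ N), hp,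
        lenAt_congr p (e.restrictScalars A), lenAt_congr p f.symm, lenAt_simple,
        Multiset.map_cons, Multiset.count_cons]
      push_cast; rfl

/-- At `(X - α)` the local length of `k[X] ⧸ (a)` is the multiplicity of the root `α` of `a`. -/
lemma lenAt_root {k : Type*} [Field k] (α : k) [(Ideal.span {X - C α} : Ideal k[X]).IsMaximal]
    (a : k[X]) (ha : a ≠ 0) :
    lenAt k[X] (Ideal.span {X - C α}) (k[X] ⧸ Ideal.span {a}) = a.rootMultiplicity α := by
  obtain ⟨q, hq, hnd⟩ := exists_eq_pow_rootMultiplicity_mul_and_not_dvd a ha α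
  have h1 : Ring.ord (Localization.AtPrime (Ideal.span {X - C α}))
      (algebraMap k[X] (Localization.AtPrime (Ideal.span {X - C α})) (X - C α)) = 1 := by
    rw [← lenAt_span, lenAt_simple, if_pos rfl]
  have hnz : algebraMap k[X] (Localization.AtPrime (Ideal.span {X - C α})) (X - C α) ∈
      nonZeroDivisors (Localization.AtPrime (Ideal.span {X - C α})) := by
    refine mem_nonZeroDivisors_of_ne_zero ?_
    have := IsLocalization.injective (Localization.AtPrime (Ideal.span {X - C α}))
      (Ideal.primeCompl_le_nonZeroDivisors (Ideal.span {X - C α}))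
    rw [Ne, map_eq_zero_iff _ this]
    exact X_sub_C_ne_zero α
  have hu : IsUnit (algebraMap k[X] (Localization.AtPrime (Ideal.span {X - C α})) q) := by
    refine IsLocalization.map_units _
      (⟨q, ?_⟩ : (Ideal.span {X - C α} : Ideal k[X]).primeCompl)
    simpa [Ideal.primeCompl, Ideal.mem_span_singleton] using hnd
  rw [lenAt_span]
  conv_lhs => rw [hq]
  rw [map_mul, Ring.ord_mul_of_isUnit_right hu, map_pow, Ring.ord_pow hnz, h1]
  simp

lemma count_map_modEq {ι κ : Type*} [DecidableEq ι] [DecidableEq κ] (f : ι → κ) (n : ℕ)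
    (s t : Multiset ι) (h : ∀ i, s.count i ≡ t.count i [MOD n]) (b : κ) :
    (s.map f).count b ≡ (t.map f).count b [MOD n] := by
  have key : ∀ u : Multiset ι, u ≤ s + t → (u.map f).count b =
      ∑ i ∈ (s + t).toFinset, if b = f i then u.count i else 0 := by
    intro u hu
    rw [Multiset.count_map, ← Multiset.sum_count_eq_card (s := (s + t).toFinset)]
    · exact Finset.sum_congr rfl fun i _ => by rw [Multiset.count_filter]
    · intro i hi
      exact Multiset.mem_toFinset.2 (Multiset.mem_of_le hu (Multiset.mem_of_mem_filter hi))
  rw [key s (by simp), key t (by simp)]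
  refine Nat.ModEq.sum fun i _ => ?_
  split_ifs
  exacts [h i, rfl]

lemma exists_pow_of_rootMultiplicity {k : Type*} [Field k] [IsAlgClosed k] {n : ℕ} (hn : 0 < n)
    (a : k[X]) (h : ∀ α, n ∣ a.rootMultiplicity α) : ∃ c : k[X], a = c ^ n := by
  classical
  obtain ⟨d, hd⟩ := IsAlgClosed.exists_pow_nat_eq a.leadingCoeff hn
  choose m hm using h
  refine ⟨C d * ∏ α ∈ a.roots.toFinset, (X - C α) ^ m α, ?_⟩
  conv_lhs => rw [(IsAlgClosed.splits a).eq_prod_roots, Finset.prod_multiset_map_count]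
  rw [mul_pow, ← C_pow, hd, ← Finset.prod_pow]
  congr 1
  refine Finset.prod_congr rfl fun α _ => ?_
  rw [count_roots, hm, ← pow_mul, mul_comm]

lemma exists_ratFunc_pow {k : Type*} [Field k] [IsAlgClosed k] {n : ℕ} (hn : 0 < n)
    (a b : k[X]) (ha : a ≠ 0) (hb : b ≠ 0)
    (h : ∀ α, a.rootMultiplicity α ≡ b.rootMultiplicity α [MOD n]) :
    ∃ r : RatFunc k, r ≠ 0 ∧
      algebraMap k[X] (RatFunc k) a / algebraMap k[X] (RatFunc k) b = r ^ n := by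
  classical
  obtain ⟨c, hc⟩ := exists_pow_of_rootMultiplicity hn (a * b ^ (n - 1)) fun α => by
    rw [rootMultiplicity_mul (mul_ne_zero ha (pow_ne_zero _ hb)),
      ← count_roots (p := b ^ (n - 1)), roots_pow,
      Multiset.count_nsmul, count_roots]
    obtain ⟨m, rfl⟩ : ∃ m, n = m + 1 := ⟨n - 1, by omega⟩
    rw [← Nat.modEq_zero_iff_dvd]
    refine ((h α).add_right _).trans ?_
    rw [Nat.modEq_zero_iff_dvd]
    exact ⟨rootMultiplicity α b, by simp; ring⟩
  have hb' : algebraMap k[X] (RatFunc k) b ≠ 0 := by simpa using hb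
  have ha' : algebraMap k[X] (RatFunc k) a ≠ 0 := by simpa using ha
  have key : algebraMap k[X] (RatFunc k) a / algebraMap k[X] (RatFunc k) b =
      (algebraMap k[X] (RatFunc k) c / algebraMap k[X] (RatFunc k) b) ^ n := by
    rw [div_pow, ← map_pow, ← hc, map_mul, map_pow]
    obtain ⟨m, rfl⟩ : ∃ m, n = m + 1 := ⟨n - 1, by omega⟩
    simp only [Nat.add_sub_cancel]
    rw [pow_succ']
    field_simp
  refine ⟨_, ?_, key⟩
  intro h0
  rw [h0, zero_pow hn.ne'] at key
  exact (div_ne_zero ha' hb') key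


section main
variable {k : Type} [Field k] [IsAlgClosed k] {R : Type} [CommRing R] [IsDomain R]
  [Algebra k[X] R] [Module.Free k[X] R] [Module.Finite k[X] R]

open Classical in
/-- The multiset of composition factors of `R ⧸ (g)` records both the lengths of `R_P ⧸ (g)` and,
after contraction to `k[X]`, the root multiplicities of the norm of `g`. -/
lemma exists_norm_factors (g : R) (hg : g ≠ 0) :
    ∃ s : Multiset (Ideal R), (∀ Q ∈ s, Q.IsMaximal) ∧
      (∀ (P : Ideal R) [P.IsMaximal],
        Module.length (Localization.AtPrime P)
          (Localization.AtPrime P ⧸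
            Ideal.span {algebraMap R (Localization.AtPrime P) g}) = s.count P) ∧
      ∀ α : k, (Algebra.norm k[X] g).rootMultiplicity α =
        (s.map (Ideal.comap (algebraMap k[X] R))).count (Ideal.span {X - C α}) := by
  let : Algebra k R := ((algebraMap k[X] R).comp C).toAlgebra
  have : IsScalarTower k k[X] R := IsScalarTower.of_algebraMap_eq fun _ => rfl
  have hft : Algebra.FiniteType k R :=
    Algebra.FiniteType.trans (S := k[X]) inferInstance inferInstance
  let b := Module.Free.chooseBasis k[X] R
  have hI : Ideal.span {g} ≠ ⊥ := by simpa using hg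
  let e := Ideal.quotientEquivPiSpan (Ideal.span {g}) b hI
  have hfin : FiniteDimensional k (R ⧸ Ideal.span {g}) :=
    Module.Finite.equiv (e.restrictScalars k).symm
  have hfl : IsFiniteLength R (R ⧸ Ideal.span {g}) := by
    rw [isFiniteLength_iff_isNoetherian_isArtinian]
    exact ⟨isNoetherian_of_tower k inferInstance, isArtinian_of_tower k inferInstance⟩
  obtain ⟨s, hs, hP, hp⟩ := exists_factors (A := k[X])
    (fun Q _ => Ideal.isMaximal_comap_of_isIntegral_of_isMaximal Q)
    -- Zariski's lemma: `R ⧸ Q` is finite over `k`, hence equal to `k`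
    (fun Q _ => by
      let := Ideal.Quotient.field Q
      have : Module.Finite k (R ⧸ Q) := finite_of_finite_type_of_isJacobsonRing k (R ⧸ Q)
      intro y
      obtain ⟨c, hc⟩ := (IsAlgClosed.algebraMap_bijective_of_isIntegral (k := k) (K := R ⧸ Q)).2 y
      exact ⟨C c, hc⟩) hfl
  refine ⟨s, hs, fun P _ => ?_, fun α => ?_⟩
  · rw [← hP, lenAt_span, Ring.ord]
  · have : (Ideal.span {X - C α} : Ideal k[X]).IsMaximal :=
      PrincipalIdealRing.isMaximal_of_irreducible (irreducible_X_sub_C α)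
    have hne := Ideal.smithCoeffs_ne_zero b _ hI
    have h1 := hp (Ideal.span {X - C α})
    rw [lenAt_congr _ e, lenAt_pi] at h1
    simp_rw [fun i => lenAt_root α _ (hne i)] at h1
    have h2 := associated_norm_prod_smith b hg
    have h3 : (Algebra.norm k[X] g).rootMultiplicity α =
        ∑ i, ((Ideal.span {g}).smithCoeffs b hI i).rootMultiplicity α := by
      rw [← count_roots, h2.roots_eq, roots_prod _ _ (Finset.prod_ne_zero_iff.2 fun i _ => hne i)]
      simp [Multiset.count_bind]
    rw [h3]
    exact_mod_cast h1

end main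

/-- Let `k` be an algebraically closed field of characteristic zero, `n` a positive integer,
and `F ∈ k[x][y]` irreducible (as an element of `k[x,y]`), monic in `y` and of positive
degree in `y`.  Let `R = k[x][y]/(F)` (realized as `AdjoinRoot F`) and let `K` be its field
of fractions, a finite extension of `k(x)`.  If `g, h` are nonzero elements of `R` such
that for every maximal ideal `P` of `R` the modules `R_P/gR_P` and `R_P/hR_P` have finite
lengths whose difference is divisible by `n`, then `N_{K/k(x)}(g/h)` is an `n`-th power in
`k(x)^*`. -/
theorem stmt0 (k : Type) [Field k] [IsAlgClosed k] [CharZero k] (n : ℕ) (hn : 0 < n)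
    (F : Polynomial (Polynomial k)) (hFirr : Irreducible F) (hFmonic : F.Monic)
    (hFdeg : 0 < F.natDegree)
    (K : Type) [Field K] [Algebra (AdjoinRoot F) K] [IsFractionRing (AdjoinRoot F) K]
    [Algebra (Polynomial k) K] [Algebra (RatFunc k) K]
    [IsScalarTower (Polynomial k) (AdjoinRoot F) K]
    [IsScalarTower (Polynomial k) (RatFunc k) K]
    [FiniteDimensional (RatFunc k) K]
    (g h : AdjoinRoot F) (hg : g ≠ 0) (hh : h ≠ 0)
    (hlen : ∀ (P : Ideal (AdjoinRoot F)) [P.IsMaximal],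
      ∃ a b : ℕ,
        moduleLength (Localization.AtPrime P)
          (Localization.AtPrime P ⧸
            Ideal.span {algebraMap (AdjoinRoot F) (Localization.AtPrime P) g}) = (a : ℕ) ∧
        moduleLength (Localization.AtPrime P)
          (Localization.AtPrime P ⧸
            Ideal.span {algebraMap (AdjoinRoot F) (Localization.AtPrime P) h}) = (b : ℕ) ∧
        (n : ℤ) ∣ (a : ℤ) - (b : ℤ)) :
    ∃ r : RatFunc k, r ≠ 0 ∧
      Algebra.norm (RatFunc k)
        (algebraMap (AdjoinRoot F) K g / algebraMap (AdjoinRoot F) K h) = r ^ n := by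
  classical
  have : Fact (Irreducible F) := ⟨hFirr⟩
  have hdom : IsDomain (AdjoinRoot F) := AdjoinRoot.isDomain_of_prime hFirr.prime
  have : Module.Free k[X] (AdjoinRoot F) := hFmonic.free_adjoinRoot
  have : Module.Finite k[X] (AdjoinRoot F) := hFmonic.finite_adjoinRoot
  obtain ⟨s, hs, hsP, hsr⟩ := exists_norm_factors (k := k) g hg
  obtain ⟨t, ht, htP, htr⟩ := exists_norm_factors (k := k) h hh
  have hst : ∀ P, s.count P ≡ t.count P [MOD n] := by
    intro P
    by_cases hP : P.IsMaximal
    · obtain ⟨a, b, ha, hb, hab⟩ := hlen P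
      rw [moduleLength, ← Module.coe_length, hsP] at ha
      rw [moduleLength, ← Module.coe_length, htP] at hb
      have ha' : s.count P = a := by exact_mod_cast ha
      have hb' : t.count P = b := by exact_mod_cast hb
      rw [ha', hb']
      exact (Int.natCast_modEq_iff.1 (Int.modEq_iff_dvd.2 hab)).symm
    -- only maximal ideals occur in `s` and `t`
    · rw [Multiset.count_eq_zero_of_notMem fun hm => hP (hs P hm),
        Multiset.count_eq_zero_of_notMem fun hm => hP (ht P hm)]
  obtain ⟨r, hr, hrn⟩ := exists_ratFunc_pow hn (Algebra.norm k[X] g) (Algebra.norm k[X] h)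
    (by rwa [Ne, Algebra.norm_eq_zero_iff]) (by rwa [Ne, Algebra.norm_eq_zero_iff]) fun α => by
      rw [hsr, htr]
      exact count_map_modEq _ n s t hst _
  refine ⟨r, hr, ?_⟩
  -- `K` is also the localization of `R` at the nonzero elements of `k[X]`, so norms agree
  have hh' : algebraMap k[X] (RatFunc k) (Algebra.norm k[X] h) ≠ 0 := by
    simpa [Algebra.norm_eq_zero_iff] using hh
  have hhK : algebraMap (AdjoinRoot F) K h ≠ 0 := by simpa using hh
  rw [← hrn, eq_div_iff hh', ← Algebra.norm_localization k[X] (nonZeroDivisors k[X]) (Sₘ := K) g,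
    ← Algebra.norm_localization k[X] (nonZeroDivisors k[X]) (Sₘ := K) h, ← map_mul,
    div_mul_cancel₀ _ hhK]
end

section
/- Let k be an algebraically closed field. For any two homogeneous polynomials F and G of degree 2 in three variables over k, there exists a nonzero vector (u, v, w) ∈ k³ with F(u, v, w) = 0 and G(u, v, w) = 0. -/
/-!
Suppose the origin of `k³` is the only common zero of `F` and `G`. By the Nullstellensatz, every
polynomial vanishing at the origin lies in the radical of `(F, G)`, so the maximal ideal `𝔪` of the
origin is a minimal prime of `(F, G)`, and Krull's height theorem gives `height 𝔪 ≤ 2`. However,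
`0 < (X₀) < (X₀, X₁) < 𝔪` is a chain of primes, so `height 𝔪 ≥ 3` (`three_le_height`).
Homogeneity is used only to know that `F` and `G` vanish at the origin.
-/

open MvPolynomial

/-- The substitution `Xᵢ ↦ 0` for `i < j`, `Xᵢ ↦ Xᵢ` for `i ≥ j`. Its kernel is the prime ideal
generated by the `Xᵢ` with `i < j`; defining that ideal as a kernel makes primality immediate. -/
noncomputable def killBelow (k : Type*) [Field k] (j : ℕ) :
    MvPolynomial (Fin 3) k →ₐ[k] MvPolynomial (Fin 3) k :=
  aeval fun i => if i.val < j then 0 else X i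

lemma ker_killBelow_lt (k : Type*) [Field k] (j : Fin 3) :
    RingHom.ker (killBelow k j.val) < RingHom.ker (killBelow k (j.val + 1)) := by
  have hcomp : (killBelow k (j.val + 1)).comp (killBelow k j.val) = killBelow k (j.val + 1) := by
    ext1 i
    by_cases h : i.val < j.val
    · have h' : i < j := h
      simp [killBelow, h', h'.le]
    · have h' : ¬ i < j := h
      simp [killBelow, h']
  refine SetLike.lt_iff_le_and_exists.mpr ⟨fun f hf => ?_, X j, ?_, ?_⟩
  · rw [RingHom.mem_ker] at hf ⊢
    rw [← hcomp, AlgHom.comp_apply, hf, map_zero]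
  · simp [RingHom.mem_ker, killBelow]
  · simp [RingHom.mem_ker, killBelow]

lemma three_le_height (k : Type*) [Field k] :
    3 ≤ (vanishingIdeal k {(0 : Fin 3 → k)}).height := by
  have step (j : Fin 3) : (RingHom.ker (killBelow k j.val)).height + 1 ≤
      (RingHom.ker (killBelow k (j.val + 1))).height := by
    have := RingHom.ker_isPrime (killBelow k j.val)
    have := RingHom.ker_isPrime (killBelow k (j.val + 1))
    exact Ideal.height_add_one_le_of_lt_of_isPrime (ker_killBelow_lt k j)
  have hle : RingHom.ker (killBelow k 3) ≤ vanishingIdeal k {(0 : Fin 3 → k)} := by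
    intro f hf
    have hcomp : (aeval (0 : Fin 3 → k)).comp (killBelow k 3) = aeval (0 : Fin 3 → k) := by
      ext i
      simp [killBelow]
    rw [mem_vanishingIdeal_singleton_iff, ← hcomp, AlgHom.comp_apply, RingHom.mem_ker.mp hf,
      map_zero]
  calc (3 : ℕ∞) ≤ (RingHom.ker (killBelow k 0)).height + 1 + 1 + 1 := by
        rw [add_assoc, add_assoc]
        exact le_add_left (by norm_num)
    _ ≤ (RingHom.ker (killBelow k 1)).height + 1 + 1 := by gcongr; exact step 0
    _ ≤ (RingHom.ker (killBelow k 2)).height + 1 := by gcongr; exact step 1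
    _ ≤ (RingHom.ker (killBelow k 3)).height := step 2
    _ ≤ _ := Ideal.height_mono hle

/-- Any two conics in the projective plane over an algebraically closed field intersect:
for any two homogeneous polynomials `F`, `G` of degree 2 in three variables over an
algebraically closed field `k`, there is a nonzero vector `(u, v, w) ∈ k³` on which both
`F` and `G` vanish. -/
theorem stmt3 (k : Type*) [Field k] [IsAlgClosed k]
    (F G : MvPolynomial (Fin 3) k)
    (hF : F.IsHomogeneous 2) (hG : G.IsHomogeneous 2) :
    ∃ v : Fin 3 → k, v ≠ 0 ∧
      MvPolynomial.eval v F = 0 ∧ MvPolynomial.eval v G = 0 := by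
  by_contra! hcon
  have hzero {P : MvPolynomial (Fin 3) k} (hP : P.IsHomogeneous 2) :
      P ∈ vanishingIdeal k {(0 : Fin 3 → k)} := by
    rw [mem_vanishingIdeal_singleton_iff, aeval_zero, constantCoeff_eq]
    simpa using hP.coeff_eq_zero (d := 0) (by simp)
  have hlocus : zeroLocus k (Ideal.span {F, G}) ⊆ {(0 : Fin 3 → k)} := by
    intro x hx
    simp only [zeroLocus_span, Set.mem_ofPred_eq, Set.mem_insert_iff, Set.mem_singleton_iff,
      forall_eq_or_imp, forall_eq, aeval_eq_eval] at hx
    by_contra hne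
    exact hcon x hne hx.1 hx.2
  have hmin : vanishingIdeal k {(0 : Fin 3 → k)} ∈ (Ideal.span {F, G}).minimalPrimes := by
    refine ⟨⟨Ideal.IsMaximal.isPrime inferInstance, ?_⟩, fun P hP _ => ?_⟩
    · rw [Ideal.span_le, Set.insert_subset_iff, Set.singleton_subset_iff]
      exact ⟨hzero hF, hzero hG⟩
    · calc vanishingIdeal k {(0 : Fin 3 → k)}
          ≤ vanishingIdeal k (zeroLocus k (Ideal.span {F, G})) := vanishingIdeal_anti_mono hlocus
        _ = (Ideal.span {F, G}).radical := vanishingIdeal_zeroLocus_eq_radical _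
        _ ≤ P := hP.1.radical_le_iff.mpr hP.2
  have hle := Ideal.height_le_card_of_mem_minimalPrimes_span (Set.toFinite _) hmin
  have hcard : ({F, G} : Set (MvPolynomial (Fin 3) k)).ncard ≤ 2 := by
    simpa using Set.ncard_insert_le F {G}
  have h32 := (three_le_height k).trans (hle.trans (Nat.cast_le.mpr hcard))
  exact absurd h32 (by norm_num)
end

section
/- Let k be an algebraically closed field and let F, G ∈ k[x, y, z] be homogeneous polynomials of degree 2. Then there exists an invertible 3 × 3 matrix M over k such that, after the linear change of variables defined by M, both polynomials have vanishing coefficient at y²: writing F∘M and G∘M for the polynomials obtained by substituting (x, y, z) ↦ M·(x, y, z)ᵗ, the coefficient of the monomial y² in F∘M and in G∘M is zero. -/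
/-!
By the Nullstellensatz, if the origin were the only common zero of `F` and `G`, the ideal `m` of
the origin would be a minimal prime over `(F, G)`, so Krull's height theorem would give it height
at most `2`. But `m` has height at least `3`, because of the chain `0 < (x) < (x, y) < (x, y, z)`.
Hence `F` and `G` have a common zero `v ≠ 0` (`exists_common_zero`). Any invertible `M` whose
middle column is `v` works: the `y²`-coefficient of the quadratic form `F ∘ M` is its value at
`(0, 1, 0)`, which is `F v = 0`.
-/

open MvPolynomial

/-- The substitution `k[x, y, z] → k[x, y, z]` that sends the first `n` variables to `0` and fixes
the others. -/
noncomputable def killVars (k : Type*) [Field k] (n : ℕ) :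
    MvPolynomial (Fin 3) k →ₐ[k] MvPolynomial (Fin 3) k :=
  aeval fun i => if (i : ℕ) < n then 0 else X i

/-- The prime ideal generated by the first `n` variables, encoded as the kernel of `killVars` so
that primality is immediate. -/
noncomputable def varsIdeal (k : Type*) [Field k] (n : ℕ) : Ideal (MvPolynomial (Fin 3) k) :=
  RingHom.ker (killVars k n)

instance varsIdeal_isPrime (k : Type*) [Field k] (n : ℕ) : (varsIdeal k n).IsPrime :=
  RingHom.ker_isPrime _

theorem varsIdeal_lt_succ (k : Type*) [Field k] (n : ℕ) (hn : n < 3) :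
    varsIdeal k n < varsIdeal k (n + 1) := by
  have hcomp : (killVars k (n + 1)).comp (killVars k n) = killVars k (n + 1) := by
    refine MvPolynomial.algHom_ext fun i => ?_
    by_cases h : (i : ℕ) < n
    · simp [killVars, h, h.le]
    · simp [killVars, h]
  refine lt_of_le_of_ne (fun p hp => ?_) fun heq => ?_
  · have hp' : killVars k n p = 0 := hp
    change killVars k (n + 1) p = 0
    rw [← hcomp, AlgHom.comp_apply, hp', map_zero]
  · have hX : (X ⟨n, hn⟩ : MvPolynomial (Fin 3) k) ∈ varsIdeal k (n + 1) := by
      change killVars k (n + 1) _ = 0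
      simp [killVars]
    rw [← heq] at hX
    have hX' : killVars k n (X ⟨n, hn⟩) = 0 := hX
    simp [killVars] at hX'

theorem three_le_height_varsIdeal (k : Type*) [Field k] : 3 ≤ (varsIdeal k 3).height := by
  have h (n : ℕ) (hn : n < 3) := Ideal.height_add_one_le_of_lt_of_isPrime (varsIdeal_lt_succ k n hn)
  calc (3 : ℕ∞) = 0 + 1 + 1 + 1 := by norm_num
    _ ≤ (varsIdeal k 0).height + 1 + 1 + 1 := by gcongr; exact zero_le
    _ ≤ (varsIdeal k 1).height + 1 + 1 := by gcongr; exact h 0 (by norm_num)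
    _ ≤ (varsIdeal k 2).height + 1 := by gcongr; exact h 1 (by norm_num)
    _ ≤ (varsIdeal k 3).height := h 2 (by norm_num)

theorem mem_varsIdeal_three_iff {k : Type*} [Field k] (p : MvPolynomial (Fin 3) k) :
    p ∈ varsIdeal k 3 ↔ aeval (0 : Fin 3 → k) p = 0 := by
  have hcomp : killVars k 3 = (Algebra.ofId k _).comp (aeval (0 : Fin 3 → k)) := by
    refine MvPolynomial.algHom_ext fun i => ?_
    simp [killVars]
  change killVars k 3 p = 0 ↔ _
  rw [hcomp]
  simp [Algebra.ofId_apply]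

/-- Two surfaces through the origin of affine 3-space over an algebraically closed field have
another common point. For homogeneous `F` and `G` of positive degree this says that two plane
projective curves intersect. -/
theorem exists_common_zero {k : Type*} [Field k] [IsAlgClosed k]
    {F G : MvPolynomial (Fin 3) k} (hF : aeval (0 : Fin 3 → k) F = 0)
    (hG : aeval (0 : Fin 3 → k) G = 0) :
    ∃ v : Fin 3 → k, v ≠ 0 ∧ aeval v F = 0 ∧ aeval v G = 0 := by
  classical
  by_contra! hv
  have hmin : varsIdeal k 3 ∈
      (Ideal.span (({F, G} : Finset (MvPolynomial (Fin 3) k)) : Set _)).minimalPrimes := by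
    refine ⟨⟨inferInstance, ?_⟩, ?_⟩
    · rw [Ideal.span_le]
      intro p hp
      simp only [Finset.coe_insert, Finset.coe_singleton, Set.mem_insert_iff,
        Set.mem_singleton_iff] at hp
      rcases hp with rfl | rfl
      · exact (mem_varsIdeal_three_iff _).2 hF
      · exact (mem_varsIdeal_three_iff _).2 hG
    · rintro Q ⟨hQ, hle⟩ - p hp
      refine hQ.radical_le_iff.2 hle ?_
      rw [← vanishingIdeal_zeroLocus_eq_radical (K := k), zeroLocus_span]
      intro x hx
      have hx0 : x = 0 := by
        by_contra hne
        exact hv x hne (hx F (by simp)) (hx G (by simp))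
      rw [hx0]
      exact (mem_varsIdeal_three_iff p).1 hp
  have h2 := (three_le_height_varsIdeal k).trans
    (Ideal.height_le_card_of_mem_minimalPrimes_span_finset hmin)
  have h3 : 3 ≤ ({F, G} : Finset (MvPolynomial (Fin 3) k)).card := by exact_mod_cast h2
  exact absurd (h3.trans Finset.card_le_two) (by norm_num)

theorem exists_isUnit_matrix_col_one {k : Type*} [Field k] {v : Fin 3 → k} (hv : v ≠ 0) :
    ∃ M : Matrix (Fin 3) (Fin 3) k, IsUnit M ∧ ∀ i, M i 1 = v i := by
  obtain ⟨i, hi⟩ := Function.ne_iff.1 hv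
  -- The other two columns are the standard basis vectors different from `e i`.
  fin_cases i
  · refine ⟨!![0, v 0, 0; 1, v 1, 0; 0, v 2, 1], ?_, fun i => by fin_cases i <;> rfl⟩
    rw [Matrix.isUnit_iff_isUnit_det, Matrix.det_fin_three]
    simpa using hi
  · refine ⟨!![1, v 0, 0; 0, v 1, 0; 0, v 2, 1], ?_, fun i => by fin_cases i <;> rfl⟩
    rw [Matrix.isUnit_iff_isUnit_det, Matrix.det_fin_three]
    simpa using hi
  · refine ⟨!![1, v 0, 0; 0, v 1, 1; 0, v 2, 0], ?_, fun i => by fin_cases i <;> rfl⟩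
    rw [Matrix.isUnit_iff_isUnit_det, Matrix.det_fin_three]
    simpa using hi

theorem coeff_single_eq_eval {σ k : Type*} [Fintype σ] [DecidableEq σ] [CommSemiring k]
    {H : MvPolynomial σ k} {n : ℕ} (hH : H.IsHomogeneous n) (i : σ) :
    coeff (Finsupp.single i n) H = eval (Pi.single i 1) H := by
  rw [eval_eq', Finset.sum_eq_single (Finsupp.single i n)]
  · rw [Finset.prod_eq_one, mul_one]
    intro j _
    by_cases h : j = i
    · subst h; simp
    · simp [Finsupp.single_eq_of_ne h]
  · intro d hd hne
    obtain ⟨j, hji, hj⟩ : ∃ j, j ≠ i ∧ d j ≠ 0 := by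
      by_contra! h
      have hdi : d = Finsupp.single i (d i) := by
        ext j
        by_cases hj : j = i
        · subst hj; simp
        · rw [h j hj, Finsupp.single_eq_of_ne hj]
      have hdeg := hH (mem_support_iff.1 hd)
      rw [hdi, Finsupp.weight_single] at hdeg
      apply hne
      rw [hdi]
      congr 1
      simpa using hdeg
    rw [Finset.prod_eq_zero (Finset.mem_univ j), mul_zero]
    simp [hji, hj]
  · intro h
    simp [notMem_support_iff.1 h]

theorem coeff_y_sq_eq {k : Type*} [Field k] {H : MvPolynomial (Fin 3) k}
    (hH : H.IsHomogeneous 2) (M : Matrix (Fin 3) (Fin 3) k) :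
    coeff (Finsupp.single (1 : Fin 3) 2)
      (aeval (fun i : Fin 3 => ∑ j : Fin 3, C (M i j) * X j) H) = aeval (fun i => M i 1) H := by
  have hhom : (aeval (fun i : Fin 3 => ∑ j : Fin 3, (C (M i j) * X j : MvPolynomial (Fin 3) k))
      H).IsHomogeneous 2 := by
    simpa using hH.aeval _ (n := 1) fun i => IsHomogeneous.sum _ _ _ fun j _ =>
      isHomogeneous_C_mul_X (M i j) j
  rw [coeff_single_eq_eval hhom, ← coe_aeval_eq_eval]
  change ((aeval (Pi.single 1 1 : Fin 3 → k)).comp (aeval _)) H = _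
  congr 1
  refine MvPolynomial.algHom_ext fun i => ?_
  simp [Pi.single_apply]

/-- Let `k` be algebraically closed and `F, G ∈ k[x,y,z]` homogeneous of degree 2
(variables `x = X 0`, `y = X 1`, `z = X 2`). Then there is an invertible `3 × 3` matrix `M`
over `k` such that after the linear change of variables defined by `M`, both polynomials
have vanishing coefficient at `y²`. -/
theorem stmt5 (k : Type*) [Field k] [IsAlgClosed k]
    (F G : MvPolynomial (Fin 3) k)
    (hF : F.IsHomogeneous 2) (hG : G.IsHomogeneous 2) :
    ∃ M : Matrix (Fin 3) (Fin 3) k, IsUnit M ∧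
      MvPolynomial.coeff (Finsupp.single (1 : Fin 3) 2)
        (MvPolynomial.aeval (fun i : Fin 3 => ∑ j : Fin 3, C (M i j) * X j) F) = 0 ∧
      MvPolynomial.coeff (Finsupp.single (1 : Fin 3) 2)
        (MvPolynomial.aeval (fun i : Fin 3 => ∑ j : Fin 3, C (M i j) * X j) G) = 0 := by
  have h0 {H : MvPolynomial (Fin 3) k} (hH : H.IsHomogeneous 2) :
      aeval (0 : Fin 3 → k) H = 0 := by
    rw [aeval_zero, constantCoeff_eq, hH.coeff_eq_zero (by simp), map_zero]
  obtain ⟨v, hv, hvF, hvG⟩ := exists_common_zero (h0 hF) (h0 hG)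
  obtain ⟨M, hM, hcol⟩ := exists_isUnit_matrix_col_one hv
  have hcol' : (fun i => M i 1) = v := funext hcol
  exact ⟨M, hM, by rw [coeff_y_sq_eq hF, hcol', hvF], by rw [coeff_y_sq_eq hG, hcol', hvG]⟩
end
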